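/- arXiv:1905.07551 — 7 statements merged into one kernel-verified Lean document; each statement's English description precedes it below -/
import Mathlib

section
/- Let (]a_i,b_i[)_{i∈I} be a family of nonempty, pairwise disjoint open subintervals of [0,1] and (N_i)_{i∈I} a family of fuzzy negations. Then the ordinal sum N_I of the summands (a_i,b_i,N_i)_{i∈I} is a fuzzy negation, i.e., N_I(0)=1, N_I(1)=0, and N_I is decreasing. -/
/-!
On each block `[a i, b i]` the ordinal sum is an affinely rescaled copy of `N i`, so it is decreasing
there and takes values in `[1 - b i, 1 - a i]`, i.e. between the values of `1 - x` at the endpoints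
of the block. Two distinct blocks have disjoint interiors, hence one lies to the left of the other
(`blocks_ordered`), and comparing values at points of different blocks, or at a point of a block
and a point outside all blocks, reduces to the fact that `x ↦ 1 - x` is decreasing.
-/

open Set

/-- A fuzzy negation: a function `N : [0,1] → [0,1]` (here modeled on `ℝ`)
with `N 0 = 1`, `N 1 = 0` and `N` decreasing on `[0,1]`. -/
def FuzzyNegation (N : ℝ → ℝ) : Prop :=
  (∀ x ∈ Icc (0:ℝ) 1, N x ∈ Icc (0:ℝ) 1) ∧
  N 0 = 1 ∧ N 1 = 0 ∧
  (∀ x ∈ Icc (0:ℝ) 1, ∀ y ∈ Icc (0:ℝ) 1, x ≤ y → N y ≤ N x)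

/-- `(]a i, b i[)_{i ∈ I}` is a family of nonempty, pairwise disjoint open
subintervals of `[0,1]`. -/
def GoodFamily {I : Type*} (a b : I → ℝ) : Prop :=
  (∀ i, 0 ≤ a i ∧ a i < b i ∧ b i ≤ 1) ∧
  (∀ i j, i ≠ j → Disjoint (Ioo (a i) (b i)) (Ioo (a j) (b j)))

/-- `NI` is the ordinal sum of the summands `(a i, b i, N i)_{i ∈ I}`:
`NI x = (1 - b i) + (b i - a i) * N i ((x - a i)/(b i - a i))` whenever
`x ∈ [a i, b i]`, and `NI x = 1 - x` otherwise. -/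
def IsOrdinalSum {I : Type*} (a b : I → ℝ) (N : I → ℝ → ℝ) (NI : ℝ → ℝ) : Prop :=
  ∀ x ∈ Icc (0:ℝ) 1,
    (∀ i, x ∈ Icc (a i) (b i) →
      NI x = (1 - b i) + (b i - a i) * N i ((x - a i) / (b i - a i))) ∧
    ((∀ i, x ∉ Icc (a i) (b i)) → NI x = 1 - x)

theorem blocks_ordered {I : Type*} {a b : I → ℝ} (hfam : GoodFamily a b) {i j : I} (hij : i ≠ j) :
    b i ≤ a j ∨ b j ≤ a i := by
  by_contra! h
  have hi := (hfam.1 i).2.1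
  have hj := (hfam.1 j).2.1
  -- Otherwise `max (a i) (a j) < min (b i) (b j)`, and any point in between is in both interiors.
  obtain ⟨z, hz₁, hz₂⟩ := exists_between (max_lt (lt_min hi h.2) (lt_min h.1 hj))
  rw [max_lt_iff] at hz₁
  rw [lt_min_iff] at hz₂
  exact disjoint_left.1 (hfam.2 i j hij) ⟨hz₁.1, hz₂.1⟩ ⟨hz₁.2, hz₂.2⟩

theorem rescale_mem {a b x : ℝ} (hab : a < b) (hx : x ∈ Icc a b) :
    (x - a) / (b - a) ∈ Icc (0 : ℝ) 1 := by
  have h : 0 < b - a := sub_pos.2 hab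
  exact ⟨div_nonneg (sub_nonneg.2 hx.1) h.le, (div_le_one h).2 (by linarith [hx.2])⟩

theorem ordinalSum_mem_block {I : Type*} {a b : I → ℝ} {N : I → ℝ → ℝ} {NI : ℝ → ℝ}
    (hfam : GoodFamily a b) (hneg : ∀ i, FuzzyNegation (N i)) (hNI : IsOrdinalSum a b N NI)
    {x : ℝ} (hx : x ∈ Icc (0 : ℝ) 1) {i : I} (hi : x ∈ Icc (a i) (b i)) :
    NI x ∈ Icc (1 - b i) (1 - a i) := by
  have hab := (hfam.1 i).2.1
  have hN := (hneg i).1 _ (rescale_mem hab hi)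
  rw [(hNI x hx).1 i hi]
  constructor <;> nlinarith [hN.1, hN.2]

theorem ordinalSum_isFuzzyNegation {I : Type*} (a b : I → ℝ) (N : I → ℝ → ℝ) (NI : ℝ → ℝ)
    (hfam : GoodFamily a b) (hneg : ∀ i, FuzzyNegation (N i))
    (hNI : IsOrdinalSum a b N NI) :
    FuzzyNegation NI := by
  have hblock := fun {x : ℝ} (hx : x ∈ Icc (0 : ℝ) 1) {i : I} (hi : x ∈ Icc (a i) (b i)) =>
    ordinalSum_mem_block hfam hneg hNI hx hi
  refine ⟨fun x hx => ?_, ?_, ?_, fun x hx y hy hxy => ?_⟩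
  · by_cases h : ∃ i, x ∈ Icc (a i) (b i)
    · obtain ⟨i, hi⟩ := h
      have hv := hblock hx hi
      have hf := hfam.1 i
      exact ⟨by linarith [hv.1], by linarith [hv.2]⟩
    · rw [(hNI x hx).2 (not_exists.1 h)]
      exact ⟨by linarith [hx.2], by linarith [hx.1]⟩
  · have h0 : (0 : ℝ) ∈ Icc (0 : ℝ) 1 := ⟨le_rfl, zero_le_one⟩
    by_cases h : ∃ i, (0 : ℝ) ∈ Icc (a i) (b i)
    · obtain ⟨i, hi⟩ := h
      have ha : a i = 0 := le_antisymm hi.1 (hfam.1 i).1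
      rw [(hNI 0 h0).1 i hi, ha, sub_self, zero_div, (hneg i).2.1]
      ring
    · rw [(hNI 0 h0).2 (not_exists.1 h), sub_zero]
  · have h1 : (1 : ℝ) ∈ Icc (0 : ℝ) 1 := ⟨zero_le_one, le_rfl⟩
    by_cases h : ∃ i, (1 : ℝ) ∈ Icc (a i) (b i)
    · obtain ⟨i, hi⟩ := h
      have hb : b i = 1 := le_antisymm (hfam.1 i).2.2 hi.2
      have hab : 1 - a i ≠ 0 := (sub_pos.2 (hb ▸ (hfam.1 i).2.1)).ne'
      rw [(hNI 1 h1).1 i hi, hb, div_self hab, (hneg i).2.2.1]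
      ring
    · rw [(hNI 1 h1).2 (not_exists.1 h), sub_self]
  · by_cases h : ∃ i, x ∈ Icc (a i) (b i) <;> by_cases k : ∃ j, y ∈ Icc (a j) (b j)
    · obtain ⟨i, hi⟩ := h
      obtain ⟨j, hj⟩ := k
      by_cases hij : i = j
      · subst hij
        have hab := sub_pos.2 (hfam.1 i).2.1
        rw [(hNI x hx).1 i hi, (hNI y hy).1 i hj]
        have hmono := (hneg i).2.2.2 _ (rescale_mem (hfam.1 i).2.1 hi) _
          (rescale_mem (hfam.1 i).2.1 hj)
          (div_le_div_of_nonneg_right (sub_le_sub_right hxy _) hab.le)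
        linarith [mul_le_mul_of_nonneg_left hmono hab.le]
      · rcases blocks_ordered hfam hij with hle | hle
        · linarith [(hblock hx hi).1, (hblock hy hj).2]
        -- Here `y ≤ b j ≤ a i ≤ x`, so the two points coincide.
        · have hyx : x = y := le_antisymm hxy (hj.2.trans (hle.trans hi.1))
          rw [hyx]
    · obtain ⟨i, hi⟩ := h
      rw [(hNI y hy).2 (not_exists.1 k)]
      have hlt : b i < y := by
        by_contra! hle
        exact k ⟨i, hi.1.trans hxy, hle⟩
      linarith [(hblock hx hi).1]
    · obtain ⟨j, hj⟩ := k
      rw [(hNI x hx).2 (not_exists.1 h)]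
      have hlt : x < a j := by
        by_contra! hle
        exact h ⟨j, hle, hxy.trans hj.2⟩
      linarith [(hblock hy hj).2]
    · rw [(hNI x hx).2 (not_exists.1 h), (hNI y hy).2 (not_exists.1 k)]
      linarith
end

section
/- Let (]a_i,b_i[)_{i∈I} be a family of nonempty, pairwise disjoint open subintervals of [0,1], (N_i)_{i∈I} a family of fuzzy negations, and N_I the ordinal sum of the summands (a_i,b_i,N_i)_{i∈I}. Then N_I(x) ≤ 1−x for all x ∈ [0,1] if and only if N_i(x) ≤ 1−x for all i ∈ I and all x ∈ [0,1]. -/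
/-!
The affine map `t ↦ a i + (b i - a i) * t` sends `[0,1]` onto `[a i, b i]`, and on that interval
`NI x - (1 - x) = (b i - a i) * (N i t - (1 - t))` for `x = a i + (b i - a i) * t`. As
`b i - a i > 0`, the inequality `NI x ≤ 1 - x` on `[a i, b i]` is equivalent to `N i t ≤ 1 - t` on
`[0,1]`. Outside all the intervals `NI x = 1 - x`, so nothing is left to compare there.
-/

open Set

theorem ordinalSum_le_standard_iff {I : Type*} (a b : I → ℝ) (N : I → ℝ → ℝ) (NI : ℝ → ℝ)
    (hfam : GoodFamily a b) (hneg : ∀ i, FuzzyNegation (N i))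
    (hNI : IsOrdinalSum a b N NI) :
    (∀ x ∈ Icc (0:ℝ) 1, NI x ≤ 1 - x) ↔ (∀ i, ∀ x ∈ Icc (0:ℝ) 1, N i x ≤ 1 - x) := by
  constructor
  · intro h i t ht
    obtain ⟨ha, hab, hb⟩ := hfam.1 i
    have hd : 0 < b i - a i := sub_pos.2 hab
    have h₀ : 0 ≤ (b i - a i) * t := mul_nonneg hd.le ht.1
    have h₁ : (b i - a i) * t ≤ b i - a i := mul_le_of_le_one_right hd.le ht.2
    -- The point of `[a i, b i]` whose rescaled coordinate is `t`.
    have hx : a i + (b i - a i) * t ∈ Icc (0:ℝ) 1 := ⟨by linarith, by linarith⟩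
    have hle := h _ hx
    rw [(hNI _ hx).1 i ⟨by linarith, by linarith⟩, add_sub_cancel_left,
      mul_div_cancel_left₀ t hd.ne'] at hle
    refine le_of_mul_le_mul_left ?_ hd
    linarith
  · intro h x hx
    by_cases hmem : ∃ i, x ∈ Icc (a i) (b i)
    · obtain ⟨i, hi⟩ := hmem
      have hd : 0 < b i - a i := sub_pos.2 (hfam.1 i).2.1
      have hle := mul_le_mul_of_nonneg_left
        (h i ((x - a i) / (b i - a i))
          ⟨div_nonneg (sub_nonneg.2 hi.1) hd.le, (div_le_one hd).2 (by linarith [hi.2])⟩) hd.le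
      rw [mul_sub, mul_one, mul_div_cancel₀ _ hd.ne'] at hle
      rw [(hNI x hx).1 i hi]
      linarith
    · exact ((hNI x hx).2 (not_exists.1 hmem)).le
end

section
/- Let (]a_i,b_i[)_{i∈I} be a family of nonempty, pairwise disjoint open subintervals of [0,1], (N_i)_{i∈I} a family of fuzzy negations, and N_I the ordinal sum of the summands (a_i,b_i,N_i)_{i∈I}. Then N_I(x) ≥ 1−x for all x ∈ [0,1] if and only if N_i(x) ≥ 1−x for all i ∈ I and all x ∈ [0,1]. -/
/-!
On `[a i, b i]` the ordinal sum is `N i` precomposed with the affine bijection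
`x ↦ (x - a i) / (b i - a i)` onto `[0,1]` and postcomposed with
`y ↦ (1 - b i) + (b i - a i) * y`. The same rescaling applied to the standard negation
gives back `1 - x`, and the outer map preserves and reflects order since `b i - a i > 0`, so the
inequality on `[a i, b i]` is equivalent to the one for `N i`. Off these intervals the inequality
is an equality.
-/

open Set

theorem ordinalSum_ge_standard_iff {I : Type*} (a b : I → ℝ) (N : I → ℝ → ℝ) (NI : ℝ → ℝ)
    (hfam : GoodFamily a b) (hneg : ∀ i, FuzzyNegation (N i))
    (hNI : IsOrdinalSum a b N NI) :
    (∀ x ∈ Icc (0:ℝ) 1, 1 - x ≤ NI x) ↔ (∀ i, ∀ x ∈ Icc (0:ℝ) 1, 1 - x ≤ N i x) := by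
  constructor
  · intro h i t ht
    obtain ⟨h0, hab, h1⟩ := hfam.1 i
    have hd : 0 < b i - a i := sub_pos.2 hab
    -- Evaluate the ordinal sum at the preimage of `t` under `x ↦ (x - a i) / (b i - a i)`.
    have hl : 0 ≤ (b i - a i) * t := mul_nonneg hd.le ht.1
    have hu : (b i - a i) * t ≤ b i - a i := mul_le_of_le_one_right hd.le ht.2
    have hx : a i + (b i - a i) * t ∈ Icc (0:ℝ) 1 := ⟨by linarith, by linarith⟩
    have hge := h _ hx
    rw [(hNI _ hx).1 i ⟨by linarith, by linarith⟩, add_sub_cancel_left,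
      mul_div_cancel_left₀ t hd.ne'] at hge
    refine le_of_mul_le_mul_left ?_ hd
    linarith
  · intro h x hx
    by_cases hc : ∃ i, x ∈ Icc (a i) (b i)
    · obtain ⟨i, hi⟩ := hc
      have hd : 0 < b i - a i := sub_pos.2 (hfam.1 i).2.1
      have hge := h i ((x - a i) / (b i - a i))
        ⟨div_nonneg (sub_nonneg.2 hi.1) hd.le, (div_le_one hd).2 (by linarith [hi.2])⟩
      have hmul := mul_le_mul_of_nonneg_left hge hd.le
      rw [mul_sub, mul_div_cancel₀ _ hd.ne'] at hmul
      rw [(hNI x hx).1 i hi]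
      linarith
    · exact ((hNI x hx).2 (not_exists.1 hc)).ge
end

section
/- Let (]a_i,b_i[)_{i∈I} be a family of nonempty, pairwise disjoint open subintervals of [0,1], (N_i)_{i∈I} a family of functions from [0,1] to [0,1], and N_I the function obtained by the ordinal-sum formula from these data. Then every N_i (i ∈ I) is a fuzzy negation if and only if N_I is a fuzzy negation such that N_I(a_i) = 1−a_i and N_I(b_i) = 1−b_i for each i ∈ I. -/
/-!
The affine map `x ↦ a i + (b i - a i) * x` carries `[0,1]` onto `[a i, b i]`, and there the ordinal
sum is a rescaled copy of `N i` (`ordinalSum_affine`). Reading this identity backwards gives the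
implication from `NI` to the summands: the values at the end points force `N i 0 = 1` and
`N i 1 = 0`, and monotonicity is inherited.

Conversely, on `[a i, b i]` the ordinal sum stays between `1 - b i` and `1 - a i`
(`ordinalSum_mem_Icc`). For `x ≤ y` in a common interval, monotonicity is that of `N i`. Otherwise
an end point of an interval lies between `x` and `y` (or neither point is in any interval), and `NI`
is above, resp. below, the value of `1 - id` there; by disjointness the intervals themselves are
ordered (`GoodFamily.le_of_lt_of_le`).
-/

open Set

/-- An interval reaching strictly beyond `b i` starts at or after `b i`: otherwise it would be a
different interval overlapping `]a i, b i[` just to the left of `b i`. -/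
lemma GoodFamily.le_of_lt_of_le {I : Type*} {a b : I → ℝ} (hfam : GoodFamily a b) {i j : I}
    {y : ℝ} (hy : b i < y) (hyj : y ≤ b j) : b i ≤ a j := by
  by_contra! hlt
  have hij : i ≠ j := by
    rintro rfl
    linarith
  have hi := (hfam.1 i).2.1
  obtain ⟨z, hz, hzb⟩ := exists_between (max_lt hi hlt)
  have hz' := max_lt_iff.1 hz
  exact Set.disjoint_left.1 (hfam.2 i j hij) ⟨hz'.1, hzb⟩ ⟨hz'.2, by linarith⟩

lemma rescale_mem_Icc {a b x : ℝ} (hab : a < b) (hx : x ∈ Icc a b) :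
    (x - a) / (b - a) ∈ Icc (0:ℝ) 1 := by
  have h : 0 < b - a := sub_pos.2 hab
  exact ⟨div_nonneg (sub_nonneg.2 hx.1) h.le, (div_le_one h).2 (by linarith [hx.2])⟩

lemma ordinalSum_mem_Icc {I : Type*} {a b : I → ℝ} {N : I → ℝ → ℝ} {NI : ℝ → ℝ}
    (hfam : GoodFamily a b) (hmaps : ∀ i, ∀ x ∈ Icc (0:ℝ) 1, N i x ∈ Icc (0:ℝ) 1)
    (hNI : IsOrdinalSum a b N NI) {i : I} {x : ℝ} (hx : x ∈ Icc (a i) (b i)) :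
    NI x ∈ Icc (1 - b i) (1 - a i) := by
  obtain ⟨h0, hab, h1⟩ := hfam.1 i
  rw [(hNI x ⟨h0.trans hx.1, hx.2.trans h1⟩).1 i hx]
  obtain ⟨hl, hu⟩ := hmaps i _ (rescale_mem_Icc hab hx)
  constructor <;> nlinarith

/-- On `[a i, b i]`, in the coordinate of `[0,1]`, the ordinal sum is a rescaled copy of `N i`. -/
lemma ordinalSum_affine {I : Type*} {a b : I → ℝ} {N : I → ℝ → ℝ} {NI : ℝ → ℝ}
    (hfam : GoodFamily a b) (hNI : IsOrdinalSum a b N NI) (i : I) {x : ℝ}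
    (hx : x ∈ Icc (0:ℝ) 1) :
    a i + (b i - a i) * x ∈ Icc (0:ℝ) 1 ∧
      NI (a i + (b i - a i) * x) = (1 - b i) + (b i - a i) * N i x := by
  obtain ⟨h0, hab, h1⟩ := hfam.1 i
  obtain ⟨hx0, hx1⟩ := hx
  have hmem : a i + (b i - a i) * x ∈ Icc (a i) (b i) := by
    constructor <;> nlinarith
  have hmem' : a i + (b i - a i) * x ∈ Icc (0:ℝ) 1 := ⟨h0.trans hmem.1, hmem.2.trans h1⟩
  have hne : b i - a i ≠ 0 := (sub_pos.2 hab).ne'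
  refine ⟨hmem', ?_⟩
  rw [(hNI _ hmem').1 i hmem, add_sub_cancel_left, mul_div_cancel_left₀ _ hne]

/-- The end point values of an ordinal sum of fuzzy negations. -/
lemma ordinalSum_endpoints {I : Type*} {a b : I → ℝ} {N : I → ℝ → ℝ} {NI : ℝ → ℝ}
    (hfam : GoodFamily a b) (hNI : IsOrdinalSum a b N NI) (hN : ∀ i, FuzzyNegation (N i))
    (i : I) : NI (a i) = 1 - a i ∧ NI (b i) = 1 - b i := by
  have ha := (ordinalSum_affine hfam hNI i (x := 0) (by simp)).2
  have hb := (ordinalSum_affine hfam hNI i (x := 1) (by simp)).2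
  rw [(hN i).2.1, mul_zero, add_zero] at ha
  rw [(hN i).2.2.1, mul_one, add_sub_cancel] at hb
  constructor <;> linarith

lemma ordinalSum_antitone {I : Type*} {a b : I → ℝ} {N : I → ℝ → ℝ} {NI : ℝ → ℝ}
    (hfam : GoodFamily a b) (hNI : IsOrdinalSum a b N NI) (hN : ∀ i, FuzzyNegation (N i))
    {x y : ℝ} (hx : x ∈ Icc (0:ℝ) 1) (hy : y ∈ Icc (0:ℝ) 1) (hxy : x ≤ y) : NI y ≤ NI x := by
  have hmaps := fun i => (hN i).1
  by_cases hxi : ∃ i, x ∈ Icc (a i) (b i)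
  · obtain ⟨i, hxi⟩ := hxi
    have hab := (hfam.1 i).2.1
    have hpos : 0 < b i - a i := sub_pos.2 hab
    rcases le_or_gt y (b i) with hyb | hyb
    · have hyi : y ∈ Icc (a i) (b i) := ⟨hxi.1.trans hxy, hyb⟩
      rw [(hNI x hx).1 i hxi, (hNI y hy).1 i hyi]
      have := (hN i).2.2.2 _ (rescale_mem_Icc hab hxi) _ (rescale_mem_Icc hab hyi)
        (by gcongr)
      gcongr
    -- Here `b i` separates `x` from `y`: `NI y ≤ 1 - b i ≤ NI x`.
    · refine le_trans ?_ (ordinalSum_mem_Icc hfam hmaps hNI hxi).1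
      by_cases hyj : ∃ j, y ∈ Icc (a j) (b j)
      · obtain ⟨j, hyj⟩ := hyj
        linarith [(ordinalSum_mem_Icc hfam hmaps hNI hyj).2, hfam.le_of_lt_of_le hyb hyj.2]
      · rw [(hNI y hy).2 (not_exists.1 hyj)]
        linarith
  · rw [(hNI x hx).2 (not_exists.1 hxi)]
    by_cases hyj : ∃ j, y ∈ Icc (a j) (b j)
    · obtain ⟨j, hyj⟩ := hyj
      have hlt : x < a j := by
        by_contra! h
        exact hxi ⟨j, h, hxy.trans hyj.2⟩
      linarith [(ordinalSum_mem_Icc hfam hmaps hNI hyj).2]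
    · rw [(hNI y hy).2 (not_exists.1 hyj)]
      linarith

theorem ordinalSum_fuzzyNegation_iff {I : Type*} (a b : I → ℝ) (N : I → ℝ → ℝ) (NI : ℝ → ℝ)
    (hfam : GoodFamily a b)
    (hmaps : ∀ i, ∀ x ∈ Icc (0:ℝ) 1, N i x ∈ Icc (0:ℝ) 1)
    (hNI : IsOrdinalSum a b N NI) :
    (∀ i, FuzzyNegation (N i)) ↔
      (FuzzyNegation NI ∧ ∀ i, NI (a i) = 1 - a i ∧ NI (b i) = 1 - b i) := by
  constructor
  · intro hN
    have hend := ordinalSum_endpoints hfam hNI hN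
    have hanti : ∀ x ∈ Icc (0:ℝ) 1, ∀ y ∈ Icc (0:ℝ) 1, x ≤ y → NI y ≤ NI x :=
      fun x hx y hy hxy => ordinalSum_antitone hfam hNI hN hx hy hxy
    have m0 : (0:ℝ) ∈ Icc (0:ℝ) 1 := by simp
    have m1 : (1:ℝ) ∈ Icc (0:ℝ) 1 := by simp
    have h0 : NI 0 = 1 := by
      by_cases h : ∃ i, (0:ℝ) ∈ Icc (a i) (b i)
      · obtain ⟨i, hi⟩ := h
        have ha : a i = 0 := le_antisymm hi.1 (hfam.1 i).1
        simpa [ha] using (hend i).1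
      · simpa using (hNI 0 m0).2 (not_exists.1 h)
    have h1 : NI 1 = 0 := by
      by_cases h : ∃ i, (1:ℝ) ∈ Icc (a i) (b i)
      · obtain ⟨i, hi⟩ := h
        have hb : b i = 1 := le_antisymm (hfam.1 i).2.2 hi.2
        simpa [hb] using (hend i).2
      · simpa using (hNI 1 m1).2 (not_exists.1 h)
    refine ⟨⟨fun x hx => ⟨?_, ?_⟩, h0, h1, hanti⟩, hend⟩
    · exact h1 ▸ hanti x hx 1 m1 hx.2
    · exact h0 ▸ hanti 0 m0 x hx hx.1
  · rintro ⟨⟨-, -, -, hanti⟩, hend⟩ i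
    have hpos : 0 < b i - a i := sub_pos.2 (hfam.1 i).2.1
    refine ⟨hmaps i, ?_, ?_, fun x hx y hy hxy => ?_⟩
    · have h := (ordinalSum_affine hfam hNI i (x := 0) (by simp)).2
      rw [mul_zero, add_zero, (hend i).1] at h
      exact mul_left_cancel₀ hpos.ne' (by linarith)
    · have h := (ordinalSum_affine hfam hNI i (x := 1) (by simp)).2
      rw [mul_one, add_sub_cancel, (hend i).2] at h
      exact mul_left_cancel₀ hpos.ne' (by linarith)
    · obtain ⟨mx, ex⟩ := ordinalSum_affine hfam hNI i hx
      obtain ⟨my, ey⟩ := ordinalSum_affine hfam hNI i hy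
      have h := hanti _ mx _ my (by gcongr)
      rw [ex, ey] at h
      exact le_of_mul_le_mul_left (by linarith) hpos
end

section
/- Let (]a_i,b_i[)_{i∈I} be a family of nonempty, pairwise disjoint open subintervals of [0,1], (N_i)_{i∈I} a family of fuzzy negations, and N_I the ordinal sum of the summands (a_i,b_i,N_i)_{i∈I}. If N_I satisfies the two properties: (1) for every i ∈ I and x ∈ [0,1], N_I(x) = 1−a_i only when x = a_i, and (2) for every i ∈ I and x ∈ [0,1], N_I(x) = 1−b_i only when x = b_i, then N_i is a frontier fuzzy negation for each i ∈ I. -/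
/-!
On `[a i, b i]` the ordinal sum is an affine copy of `N i`: at `y = a i + (b i - a i) * x` it takes
the value `(1 - b i) + (b i - a i) * N i x`. Hence `N i x = 1` forces the value `1 - a i` at `y`,
so `y = a i` and `x = 0`; likewise `N i x = 0` forces the value `1 - b i`, so `y = b i` and `x = 1`.
-/

open Set

theorem ordinalSum_summands_frontier {I : Type*} (a b : I → ℝ) (N : I → ℝ → ℝ) (NI : ℝ → ℝ)
    (hfam : GoodFamily a b) (hneg : ∀ i, FuzzyNegation (N i))
    (hNI : IsOrdinalSum a b N NI)
    (h1 : ∀ i, ∀ x ∈ Icc (0:ℝ) 1, NI x = 1 - a i → x = a i)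
    (h2 : ∀ i, ∀ x ∈ Icc (0:ℝ) 1, NI x = 1 - b i → x = b i) :
    ∀ i, (∀ x ∈ Icc (0:ℝ) 1, (N i x = 1 ↔ x = 0)) ∧
         (∀ x ∈ Icc (0:ℝ) 1, (N i x = 0 ↔ x = 1)) := by
  intro i
  obtain ⟨ha, hab, hb⟩ := hfam.1 i
  obtain ⟨-, hN0, hN1, -⟩ := hneg i
  have hd : 0 < b i - a i := sub_pos.2 hab
  -- The affine copy of `x` in `[a i, b i]`, and the value of the ordinal sum there.
  have key : ∀ x ∈ Icc (0:ℝ) 1, a i + (b i - a i) * x ∈ Icc (0:ℝ) 1 ∧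
      NI (a i + (b i - a i) * x) = (1 - b i) + (b i - a i) * N i x := by
    rintro x ⟨hx0, hx1⟩
    have hl : 0 ≤ (b i - a i) * x := mul_nonneg hd.le hx0
    have hu : (b i - a i) * x ≤ b i - a i := mul_le_of_le_one_right hd.le hx1
    have hmem : a i + (b i - a i) * x ∈ Icc (0:ℝ) 1 := ⟨by linarith, by linarith⟩
    refine ⟨hmem, ?_⟩
    rw [(hNI _ hmem).1 i ⟨by linarith, by linarith⟩, add_sub_cancel_left,
      mul_div_cancel_left₀ x hd.ne']
  refine ⟨fun x hx => ⟨fun h => ?_, fun h => h ▸ hN0⟩,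
    fun x hx => ⟨fun h => ?_, fun h => h ▸ hN1⟩⟩
  · obtain ⟨hmem, hval⟩ := key x hx
    have e := h1 i _ hmem (by rw [hval, h]; ring)
    exact (mul_eq_zero.1 (by linarith : (b i - a i) * x = 0)).resolve_left hd.ne'
  · obtain ⟨hmem, hval⟩ := key x hx
    have e := h2 i _ hmem (by rw [hval, h]; ring)
    exact mul_left_cancel₀ hd.ne' (by linarith : (b i - a i) * x = (b i - a i) * 1)
end

section
/- Let (]a_i,b_i[)_{i∈I} be a family of nonempty, pairwise disjoint open subintervals of [0,1], (N_i)_{i∈I} a family of fuzzy negations, and N_I the ordinal sum of the summands (a_i,b_i,N_i)_{i∈I}. If N_I is a strong fuzzy negation, then every N_i (i ∈ I) is a strict fuzzy negation (continuous and strictly decreasing). -/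
/-!
A strong negation `NI` is injective, hence strictly decreasing, and each `N i` is an affine
rescaling of `NI` on `[a i, b i]`; so `N i` is strictly decreasing.  For continuity it suffices
that `N i` maps `[0,1]` onto itself (`continuousOn_of_antitoneOn_surjOn`).  Since
`NI (a i) = 1 - a i` and `NI (b i) = 1 - b i`, the `NI`-preimage `NI t` of a point `t` of
`[1 - b i, 1 - a i]` lies in `[a i, b i]`, which gives surjectivity of `N i`.
-/

open Set

/-- A decreasing self-map of `[0,1]` without gaps in its range is continuous. -/
theorem continuousOn_of_antitoneOn_surjOn {f : ℝ → ℝ}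
    (hmaps : MapsTo f (Icc (0:ℝ) 1) (Icc (0:ℝ) 1))
    (hanti : AntitoneOn f (Icc (0:ℝ) 1))
    (hsurj : SurjOn f (Icc (0:ℝ) 1) (Icc (0:ℝ) 1)) :
    ContinuousOn f (Icc (0:ℝ) 1) := by
  -- Dualizing the codomain turns `f` into a monotone surjection.
  let g : Icc (0:ℝ) 1 → (Icc (0:ℝ) 1)ᵒᵈ := fun x => OrderDual.toDual ⟨f x, hmaps x.2⟩
  have hg : Monotone g := fun x y hxy => hanti x.2 y.2 hxy
  have hgs : Function.Surjective g := by
    intro y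
    obtain ⟨x, hx, hxy⟩ := hsurj (OrderDual.ofDual y).2
    exact ⟨⟨x, hx⟩, congrArg OrderDual.toDual (Subtype.ext hxy)⟩
  have hc : Continuous g := hg.continuous_of_surjective hgs
  rw [continuousOn_iff_continuous_domRestrict]
  exact continuous_subtype_val.comp (continuous_ofDual.comp hc)

theorem ordinalSum_strong_implies_strict {I : Type*} (a b : I → ℝ)
    (N : I → ℝ → ℝ) (NI : ℝ → ℝ)
    (hfam : GoodFamily a b) (hneg : ∀ i, FuzzyNegation (N i))
    (hNI : IsOrdinalSum a b N NI)
    (hstrong : FuzzyNegation NI ∧ ∀ x ∈ Icc (0:ℝ) 1, NI (NI x) = x) :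
    ∀ i, ContinuousOn (N i) (Icc (0:ℝ) 1) ∧ StrictAntiOn (N i) (Icc (0:ℝ) 1) := by
  obtain ⟨⟨hmem, -, -, hmono⟩, hinv⟩ := hstrong
  intro i
  obtain ⟨ha0, hab, hb1⟩ := hfam.1 i
  obtain ⟨nmem, n0, n1, nmono⟩ := hneg i
  have hd : 0 < b i - a i := sub_pos.2 hab
  have hscale : ∀ u ∈ Icc (0:ℝ) 1, a i + (b i - a i) * u ∈ Icc (0:ℝ) 1 ∧
      NI (a i + (b i - a i) * u) = (1 - b i) + (b i - a i) * N i u := by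
    rintro u ⟨hu0, hu1⟩
    have h1 : 0 ≤ (b i - a i) * u := by positivity
    have h2 : (b i - a i) * u ≤ b i - a i := mul_le_of_le_one_right hd.le hu1
    have hx : a i + (b i - a i) * u ∈ Icc (0:ℝ) 1 := ⟨by linarith, by linarith⟩
    refine ⟨hx, ?_⟩
    rw [(hNI _ hx).1 i ⟨by linarith, by linarith⟩, add_sub_cancel_left,
      mul_div_cancel_left₀ _ hd.ne']
  have hanti : AntitoneOn (N i) (Icc (0:ℝ) 1) := fun x hx y hy h => nmono x hx y hy h
  have hinj : InjOn (N i) (Icc (0:ℝ) 1) := by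
    intro u hu v hv huv
    obtain ⟨hu', eu⟩ := hscale u hu
    obtain ⟨hv', ev⟩ := hscale v hv
    have h : NI (NI (a i + (b i - a i) * u)) = NI (NI (a i + (b i - a i) * v)) := by
      rw [eu, ev, huv]
    rw [hinv _ hu', hinv _ hv'] at h
    exact mul_left_cancel₀ hd.ne' (add_left_cancel h)
  have hsurj : SurjOn (N i) (Icc (0:ℝ) 1) (Icc (0:ℝ) 1) := by
    rintro y ⟨hy0, hy1⟩
    have h1 : 0 ≤ (b i - a i) * y := by positivity
    have h2 : (b i - a i) * y ≤ b i - a i := mul_le_of_le_one_right hd.le hy1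
    have ht : (1 - b i) + (b i - a i) * y ∈ Icc (0:ℝ) 1 := ⟨by linarith, by linarith⟩
    have hia : NI (1 - a i) = a i := by
      have h := hscale 0 (by simp)
      rw [n0] at h
      have h' := hinv _ h.1
      rw [h.2] at h'
      ring_nf at h' ⊢
      exact h'
    have hib : NI (1 - b i) = b i := by
      have h := hscale 1 (by simp)
      rw [n1] at h
      have h' := hinv _ h.1
      rw [h.2] at h'
      ring_nf at h' ⊢
      exact h'
    have hxa := hmono _ ht (1 - a i) ⟨by linarith, by linarith⟩ (by linarith)
    have hxb := hmono (1 - b i) ⟨by linarith, by linarith⟩ _ ht (by linarith)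
    rw [hia] at hxa
    rw [hib] at hxb
    have hval := (hNI _ (hmem _ ht)).1 i ⟨hxa, hxb⟩
    rw [hinv _ ht] at hval
    exact ⟨_, ⟨div_nonneg (by linarith) hd.le, (div_le_one hd).2 (by linarith)⟩,
      (mul_left_cancel₀ hd.ne' (add_left_cancel hval)).symm⟩
  exact ⟨continuousOn_of_antitoneOn_surjOn nmem hanti hsurj,
    hanti.strictAntiOn_of_injOn hinj⟩
end

section
/- Let (]a_i,b_i[)_{i∈I} be a family of nonempty, pairwise disjoint open subintervals of [0,1] and (N_i)_{i∈I} a family of invertible fuzzy negations with inverses (N_i^{-1})_{i∈I}. Let N_I be the ordinal sum of the summands (a_i,b_i,N_i)_{i∈I} and let N_I^{-1} be the ordinal sum of the summands (1−b_i, 1−a_i, N_i^{-1})_{i∈I}. Then N_I^{-1} is the inverse of N_I, i.e., N_I(N_I^{-1}(x)) = x and N_I^{-1}(N_I(x)) = x for all x ∈ [0,1]. -/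
/-!
An ordinal sum carries each `[a i, b i]` to the reflected interval `[1 - b i, 1 - a i]` through a
rescaled copy of its summand, and is `x ↦ 1 - x` elsewhere. The ordinal sum of the inverse summands
on the reflected intervals therefore undoes it piece by piece (`ordinalSum_leftInverse`). Since
reflection is an involution, the same lemma with the two roles exchanged gives the other
composition. Ambiguity at shared endpoints is harmless: for the image of a point under the `i`-th
formula, the `i`-th formula of the inverse is also valid.
-/

open Set

/-- One-sided inversion for ordinal sums. On a summand interval `[a i, b i]` the ordinal sum `F` of
the `f i` is `f i` conjugated by affine maps onto `[0,1]`, with image in the reflected interval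
`[1 - b i, 1 - a i]`, where the ordinal sum `G` undoes it; a point outside every `[a i, b i]` is
sent by `x ↦ 1 - x` outside every reflected interval and then back. -/
lemma ordinalSum_leftInverse {I : Type*} {a b c d : I → ℝ} {f g : I → ℝ → ℝ} {F G : ℝ → ℝ}
    (hab : ∀ i, 0 ≤ a i ∧ a i < b i ∧ b i ≤ 1)
    (hc : ∀ i, c i = 1 - b i) (hd : ∀ i, d i = 1 - a i)
    (hf : ∀ i, ∀ x ∈ Icc (0:ℝ) 1, f i x ∈ Icc (0:ℝ) 1)
    (hgf : ∀ i, ∀ x ∈ Icc (0:ℝ) 1, g i (f i x) = x)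
    (hF : IsOrdinalSum a b f F) (hG : IsOrdinalSum c d g G) :
    ∀ x ∈ Icc (0:ℝ) 1, G (F x) = x := by
  intro x hx
  by_cases h : ∃ i, x ∈ Icc (a i) (b i)
  · obtain ⟨i, hi⟩ := h
    obtain ⟨ha, hlt, hb⟩ := hab i
    have hpos : 0 < b i - a i := sub_pos.2 hlt
    have ht : (x - a i) / (b i - a i) ∈ Icc (0:ℝ) 1 :=
      ⟨div_nonneg (sub_nonneg.2 hi.1) hpos.le, (div_le_one hpos).2 (by linarith [hi.2])⟩
    have hFx := (hF x hx).1 i hi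
    have hxt : (b i - a i) * ((x - a i) / (b i - a i)) = x - a i :=
      mul_div_cancel₀ _ hpos.ne'
    have hs := hf i _ ht
    have hgs := hgf i _ ht
    generalize (x - a i) / (b i - a i) = t at *
    generalize f i t = s at *
    have h0 : 0 ≤ (b i - a i) * s := mul_nonneg hpos.le hs.1
    have h1 : (b i - a i) * s ≤ b i - a i := mul_le_of_le_one_right hpos.le hs.2
    have hy : F x ∈ Icc (0:ℝ) 1 := ⟨by linarith, by linarith⟩
    have hyi : F x ∈ Icc (c i) (d i) := ⟨by linarith [hc i], by linarith [hd i]⟩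
    have hlen : d i - c i = b i - a i := by rw [hc, hd]; ring
    have hys : (F x - c i) / (d i - c i) = s := by
      rw [hlen, div_eq_iff hpos.ne', hFx, hc]; ring
    rw [(hG _ hy).1 i hyi, hys, hgs, hlen, hd, hxt]
    ring
  · push Not at h
    rw [(hF x hx).2 h, (hG (1 - x) ⟨by linarith [hx.2], by linarith [hx.1]⟩).2]
    · ring
    · intro i hi
      rw [hc, hd] at hi
      exact h i ⟨by linarith [hi.2], by linarith [hi.1]⟩

theorem ordinalSum_inverse {I : Type*} (a b : I → ℝ)
    (N Ninv : I → ℝ → ℝ) (NI NIinv : ℝ → ℝ)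
    (hfam : GoodFamily a b) (hneg : ∀ i, FuzzyNegation (N i))
    (hinvmaps : ∀ i, ∀ x ∈ Icc (0:ℝ) 1, Ninv i x ∈ Icc (0:ℝ) 1)
    (hinv : ∀ i, ∀ x ∈ Icc (0:ℝ) 1, Ninv i (N i x) = x ∧ N i (Ninv i x) = x)
    (hNI : IsOrdinalSum a b N NI)
    (hNIinv : IsOrdinalSum (fun i => 1 - b i) (fun i => 1 - a i) Ninv NIinv) :
    ∀ x ∈ Icc (0:ℝ) 1, NI (NIinv x) = x ∧ NIinv (NI x) = x := by
  -- Reflecting the intervals twice returns the original family, so the lemma applies both ways.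
  intro x hx
  constructor
  · refine ordinalSum_leftInverse (fun i => ?_) (fun i => ?_) (fun i => ?_) hinvmaps
      (fun i y hy => (hinv i y hy).2) hNIinv hNI x hx
    · obtain ⟨ha, hlt, hb⟩ := hfam.1 i
      exact ⟨by linarith, by linarith, by linarith⟩
    · ring
    · ring
  · exact ordinalSum_leftInverse hfam.1 (fun _ => rfl) (fun _ => rfl) (fun i => (hneg i).1)
      (fun i y hy => (hinv i y hy).1) hNI hNIinv x hx
end
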